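/- Let G be a finite simple graph and let H = K_1 + G be the join of a single new vertex with G. If H is not graceful, then G is not supergraceful. -/

import Mathlib

/-- The induced edge label `|φ(u) − φ(v)|` of an edge, as a function on `Sym2 V`. -/
def edgeLabel {V : Type*} (φ : V → ℕ) : Sym2 V → ℕ :=
  Sym2.lift ⟨fun u v => Nat.dist (φ u) (φ v), fun u v => Nat.dist_comm (φ u) (φ v)⟩

/-- `φ` is a graceful labeling of the graph `G` with `q` edges: it is injective,
takes values in `{0, 1, ..., q}`, and the induced edge labels `|φ(u) − φ(v)|`
form exactly the set `{1, 2, ..., q}`, each value occurring once. -/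
def IsGracefulLabeling {V : Type*} (G : SimpleGraph V) (φ : V → ℕ) : Prop :=
  Function.Injective φ ∧
  (∀ v, φ v ≤ Nat.card G.edgeSet) ∧
  Set.InjOn (edgeLabel φ) G.edgeSet ∧
  edgeLabel φ '' G.edgeSet = Set.Icc 1 (Nat.card G.edgeSet)

/-- A graph is graceful if it admits a graceful labeling. -/
def IsGraceful {V : Type*} (G : SimpleGraph V) : Prop :=
  ∃ φ : V → ℕ, IsGracefulLabeling G φ

/-- `φ` is a total labeling of the graph `G` with `p` vertices and `q` edges:
it is injective, the induced edge labels are pairwise distinct, no value is both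
a vertex label and an edge label, and the vertex labels together with the edge
labels form exactly the set `{1, 2, ..., p+q}`. -/
def IsTotalLabeling {V : Type*} (G : SimpleGraph V) (φ : V → ℕ) : Prop :=
  Function.Injective φ ∧
  Set.InjOn (edgeLabel φ) G.edgeSet ∧
  Disjoint (Set.range φ) (edgeLabel φ '' G.edgeSet) ∧
  Set.range φ ∪ edgeLabel φ '' G.edgeSet = Set.Icc 1 (Nat.card V + Nat.card G.edgeSet)

/-- A graph is supergraceful if it admits a total labeling. -/
def IsSupergraceful {V : Type*} (G : SimpleGraph V) : Prop :=
  ∃ φ : V → ℕ, IsTotalLabeling G φ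

/-- The join `K₁ + G`: a new vertex `none` adjacent to every vertex of `G`,
with `G` itself on the `some` vertices. -/
def addApex {V : Type*} (G : SimpleGraph V) : SimpleGraph (Option V) :=
  SimpleGraph.fromRel (fun x y =>
    x = none ∨ ∃ u v, x = some u ∧ y = some v ∧ G.Adj u v)

theorem addApex_edgeSet {V : Type*} (G : SimpleGraph V) :
    (addApex G).edgeSet =
      (Set.range fun v : V => s(none, some v)) ∪ Sym2.map some '' G.edgeSet := by
  ext e
  constructor
  · induction e using Sym2.ind with
    | _ x y =>
      intro h
      rw [SimpleGraph.mem_edgeSet, addApex, SimpleGraph.fromRel_adj] at h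
      obtain ⟨hne, h⟩ := h
      rcases x with _ | x <;> rcases y with _ | y
      · exact absurd rfl hne
      · exact Or.inl ⟨y, rfl⟩
      · exact Or.inl ⟨x, Sym2.eq_swap⟩
      · refine Or.inr ⟨s(x, y), ?_, rfl⟩
        rw [SimpleGraph.mem_edgeSet]
        rcases h with (h | ⟨u, v, hu, hv, ha⟩) | (h | ⟨u, v, hu, hv, ha⟩)
        · cases h
        · cases hu; cases hv; exact ha
        · cases h
        · cases hu; cases hv; exact ha.symm
  · rintro (⟨v, rfl⟩ | ⟨e, he, rfl⟩)
    · rw [SimpleGraph.mem_edgeSet, addApex, SimpleGraph.fromRel_adj]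
      exact ⟨by simp, Or.inl (Or.inl rfl)⟩
    · induction e using Sym2.ind with
      | _ x y =>
        rw [SimpleGraph.mem_edgeSet] at he
        rw [Sym2.map_mk, SimpleGraph.mem_edgeSet, addApex, SimpleGraph.fromRel_adj]
        exact ⟨by simpa using he.ne, Or.inl (Or.inr ⟨x, y, rfl, rfl, he⟩)⟩

/-- If the join `K₁ + G` is not graceful, then `G` is not supergraceful. -/
theorem not_supergraceful_of_join_not_graceful {V : Type*} [Fintype V]
    (G : SimpleGraph V) (h : ¬ IsGraceful (addApex G)) :
    ¬ IsSupergraceful G := by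
  rintro ⟨φ, hinj, hE, hdis, hun⟩
  apply h
  let ψ : Option V → ℕ := fun o => o.elim 0 φ
  have h1 : ∀ v, edgeLabel ψ s(none, some v) = φ v := fun v => by
    simp [edgeLabel, ψ, Nat.dist]
  have h2 : ∀ e, edgeLabel ψ (Sym2.map some e) = edgeLabel φ e := fun e => by
    induction e using Sym2.ind with
    | _ x y => rfl
  have hpos : ∀ v, φ v ∈ Set.Icc 1 (Nat.card V + Nat.card G.edgeSet) := fun v => by
    rw [← hun]; exact Or.inl ⟨v, rfl⟩
  have himg : edgeLabel ψ '' (addApex G).edgeSet =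
      Set.Icc 1 (Nat.card V + Nat.card G.edgeSet) := by
    rw [addApex_edgeSet, Set.image_union, ← hun, ← Set.range_comp, Set.image_image]
    simp only [h2]
    congr 2
    funext v
    exact h1 v
  have hE' : Set.InjOn (edgeLabel ψ) (addApex G).edgeSet := by
    rw [addApex_edgeSet]
    rw [Set.disjoint_left] at hdis
    rintro _ (⟨v, rfl⟩ | ⟨e, he, rfl⟩) _ (⟨w, rfl⟩ | ⟨f, hf, rfl⟩) hab
    · simp only [h1] at hab
      rw [hinj hab]
    · simp only [h1, h2] at hab
      exact absurd ⟨f, hf, hab.symm⟩ (hdis ⟨v, rfl⟩)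
    · simp only [h1, h2] at hab
      exact absurd ⟨e, he, hab⟩ (hdis ⟨w, rfl⟩)
    · simp only [h2] at hab
      rw [hE he hf hab]
  have hcard : Nat.card (addApex G).edgeSet = Nat.card V + Nat.card G.edgeSet := by
    rw [← Nat.card_image_of_injOn hE', himg]
    simp
  refine ⟨ψ, ?_, ?_, hE', ?_⟩
  · rintro (_ | a) (_ | b) hab
    · rfl
    · have := (hpos b).1
      have hab' : 0 = φ b := hab
      omega
    · have := (hpos a).1
      have hab' : φ a = 0 := hab
      omega
    · rw [hinj hab]
  · rintro (_ | a)
    · exact Nat.zero_le _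
    · rw [hcard]; exact (hpos a).2
  · rw [hcard]; exact himg
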